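/- For the homogeneous ideal I_C of the image in P⁵ of a smooth plane curve of even degree d = 2m under the Veronese embedding, I_C is generated by the six quadrics Δ_{ij} together with one form F of degree m; in particular I_C = (Δ₀₀, Δ₀₁, Δ₀₂, Δ₁₁, Δ₁₂, Δ₂₂, F) where θ(F) = f. -/

import Mathlib

open MvPolynomial

noncomputable def theta (k : Type*) [CommRing k] :
    MvPolynomial (Fin 6) k →ₐ[k] MvPolynomial (Fin 3) k :=
  MvPolynomial.aeval
    ![X 0 * X 0, X 0 * X 1, X 0 * X 2, X 1 * X 1, X 1 * X 2, X 2 * X 2]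

noncomputable def Delta (k : Type*) [CommRing k] : Fin 6 → MvPolynomial (Fin 6) k :=
  ![X 3 * X 5 - X 4 * X 4,
    X 1 * X 5 - X 4 * X 2,
    X 1 * X 4 - X 2 * X 3,
    X 0 * X 5 - X 2 * X 2,
    X 0 * X 4 - X 2 * X 1,
    X 0 * X 3 - X 1 * X 1]

/-!
Let `I = (Δ)` and let `q` be the generic symmetric `3 × 3` matrix modulo `I`. Since `q` is symmetric
and its `2 × 2` minors vanish, a product `q i₁ j₁ * ⋯ * q iₙ jₙ` depends only on the multiset of all
indices `i₁, j₁, …, iₙ, jₙ`. Sending a monomial of even degree to that product and a monomial of odd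
degree to `0` therefore gives a retraction `k[x₀, x₁, x₂] → k[x₀₀, …, x₂₂] / I` of the map induced
by `θ`, linear over `k[x₀₀, …, x₂₂]`. Such a retraction forces `θ⁻¹(θ(J)) = J + I`, where `θ(J)` is
the ideal generated by the image of `J`, and the theorem is the case `J = (F)`.
-/

/-- A symmetric matrix all of whose `2 × 2` minors vanish. By symmetry, the minor on the rows `i, l`
and the columns `j, k` is `M i j * M k l - M i k * M j l`; no subtraction is used, so that the
entries may lie in a semiring. -/
structure IsSymmRankLEOne {σ R : Type*} [CommSemiring R] (M : Matrix σ σ R) : Prop where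
  isSymm : M.IsSymm
  mul_swap : ∀ i j k l, M i j * M k l = M i k * M j l

/-- The product of the entries of `M` indexed by the consecutive pairs of a list. Lists of odd
length get the value `0`, as monomials of odd degree are not in the image of `θ`. -/
def pairProd {σ R : Type*} [CommSemiring R] (M : Matrix σ σ R) : List σ → R
  | [] => 1
  | [_] => 0
  | i :: j :: l => M i j * pairProd M l

namespace IsSymmRankLEOne

section Multiset

variable {σ R : Type*} [CommSemiring R] {M : Matrix σ σ R}

lemma pairProd_cons_swap (hM : IsSymmRankLEOne M) (x i j : σ) (l : List σ) :
    pairProd M (x :: j :: i :: l) = pairProd M (x :: i :: j :: l) := by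
  cases l with
  | nil => simp only [pairProd, mul_zero]
  | cons y l => simp only [pairProd, ← mul_assoc, hM.mul_swap x j i y]

lemma pairProd_eq_of_perm (hM : IsSymmRankLEOne M) {l₁ l₂ : List σ} (h : l₁.Perm l₂) :
    pairProd M l₁ = pairProd M l₂ := by
  -- Prepending an entry shifts the pairing, so the induction has to carry both parities.
  suffices pairProd M l₁ = pairProd M l₂ ∧ ∀ x, pairProd M (x :: l₁) = pairProd M (x :: l₂) from
    this.1
  induction h with
  | nil => exact ⟨rfl, fun _ => rfl⟩
  | cons y _ ih => exact ⟨ih.2 y, fun x => congrArg (M x y * ·) ih.1⟩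
  | swap i j l =>
    exact ⟨congrArg (· * pairProd M l) (hM.isSymm.apply i j),
      fun x => hM.pairProd_cons_swap x i j l⟩
  | trans _ _ ih₁ ih₂ => exact ⟨ih₁.1.trans ih₂.1, fun x => (ih₁.2 x).trans (ih₂.2 x)⟩

/-- `pairProd` as a function of the underlying multiset. -/
def multisetProd (hM : IsSymmRankLEOne M) (s : Multiset σ) : R :=
  Quotient.lift (pairProd M) (fun _ _ => hM.pairProd_eq_of_perm) s

lemma multisetProd_zero (hM : IsSymmRankLEOne M) : hM.multisetProd 0 = 1 := rfl

lemma multisetProd_cons_cons (hM : IsSymmRankLEOne M) (i j : σ) (s : Multiset σ) :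
    hM.multisetProd (i ::ₘ j ::ₘ s) = M i j * hM.multisetProd s :=
  Quotient.inductionOn s fun _ => rfl

end Multiset

section PairingMap

variable {σ τ R : Type*} (k : Type*) [CommSemiring k] [CommSemiring R] [Algebra k R]
  {M : Matrix σ σ R}

/-- The `k`-linear map which sends a monomial `x_{i₁} x_{j₁} ⋯ x_{iₙ} x_{jₙ}` of even degree to
`M i₁ j₁ * ⋯ * M iₙ jₙ` and kills the monomials of odd degree. -/
noncomputable def pairingMap (hM : IsSymmRankLEOne M) : MvPolynomial σ k →ₗ[k] R :=
  (basisMonomials σ k).constr k fun e => hM.multisetProd (Finsupp.toMultiset e)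

lemma pairingMap_monomial (hM : IsSymmRankLEOne M) (e : σ →₀ ℕ) :
    hM.pairingMap k (monomial e 1) = hM.multisetProd (Finsupp.toMultiset e) := by
  simpa only [pairingMap, coe_basisMonomials] using
    (basisMonomials σ k).constr_basis k (fun e => hM.multisetProd (Finsupp.toMultiset e)) e

lemma pairingMap_one (hM : IsSymmRankLEOne M) : hM.pairingMap k 1 = 1 := by
  rw [one_def, pairingMap_monomial, map_zero, multisetProd_zero]

lemma pairingMap_X_mul_X_mul (hM : IsSymmRankLEOne M) (i j : σ) (p : MvPolynomial σ k) :
    hM.pairingMap k (X i * X j * p) = M i j * hM.pairingMap k p := by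
  suffices hM.pairingMap k ∘ₗ LinearMap.mulLeft k (X i * X j) =
      LinearMap.mulLeft k (M i j) ∘ₗ hM.pairingMap k from LinearMap.congr_fun this p
  refine (basisMonomials σ k).ext fun e => ?_
  have hmul : (X i * X j * monomial e 1 : MvPolynomial σ k) =
      monomial (Finsupp.single i 1 + (Finsupp.single j 1 + e)) 1 := by
    simp only [X, monomial_mul, mul_one, add_assoc]
  simp only [coe_basisMonomials, LinearMap.comp_apply, LinearMap.mulLeft_apply, hmul,
    pairingMap_monomial, map_add, Finsupp.toMultiset_single, one_smul, Multiset.singleton_add,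
    multisetProd_cons_cons]

variable {k}

lemma pairingMap_algHom_mul (hM : IsSymmRankLEOne M) {φ : MvPolynomial τ k →ₐ[k] MvPolynomial σ k}
    {π : MvPolynomial τ k →ₐ[k] R} (hX : ∀ t, ∃ i j, φ (X t) = X i * X j ∧ π (X t) = M i j)
    (G : MvPolynomial τ k) (p : MvPolynomial σ k) :
    hM.pairingMap k (φ G * p) = π G * hM.pairingMap k p := by
  induction G using MvPolynomial.induction_on generalizing p with
  | C a => simp only [← algebraMap_eq, AlgHom.commutes, ← Algebra.smul_def, map_smul]
  | add G H hG hH => simp only [map_add, add_mul, hG, hH]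
  | mul_X G t hG =>
    obtain ⟨i, j, hφ, hπ⟩ := hX t
    rw [map_mul φ, map_mul π, mul_assoc, mul_assoc, hG, hφ, hπ, pairingMap_X_mul_X_mul]

end PairingMap

end IsSymmRankLEOne

lemma comap_map_eq_sup_of_retraction {A B : Type*} [CommRing A] [CommRing B] {φ : A →+* B}
    {I : Ideal A} (hI : I ≤ RingHom.ker φ) (ρ : B →+ A ⧸ I) (hρ_one : ρ 1 = 1)
    (hρ_mul : ∀ a b, ρ (φ a * b) = Ideal.Quotient.mk I a * ρ b) (J : Ideal A) :
    (J.map φ).comap φ = J ⊔ I := by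
  refine le_antisymm (fun a ha => ?_) (sup_le Ideal.le_comap_map fun a ha => ?_)
  · have hρ_map : ∀ b ∈ J.map φ, ∀ c, ρ (b * c) ∈ J.map (Ideal.Quotient.mk I) := by
      intro b hb
      induction hb using Submodule.span_induction with
      | mem _ hb =>
        obtain ⟨a, ha, rfl⟩ := hb
        exact fun c => hρ_mul a c ▸ Ideal.mul_mem_right _ _ (Ideal.mem_map_of_mem _ ha)
      | zero => simp only [zero_mul, map_zero, zero_mem, implies_true]
      | add b₁ b₂ _ _ h₁ h₂ =>
        intro c
        rw [add_mul, map_add]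
        exact add_mem (h₁ c) (h₂ c)
      | smul d b _ h =>
        intro c
        rw [smul_eq_mul, mul_comm d, mul_assoc]
        exact h (d * c)
    have hmk : Ideal.Quotient.mk I a ∈ J.map (Ideal.Quotient.mk I) := by
      have hρ_φ : ρ (φ a * 1) = Ideal.Quotient.mk I a := by rw [hρ_mul, hρ_one, mul_one]
      exact hρ_φ ▸ hρ_map (φ a) ha 1
    exact Ideal.mem_quotient_iff_mem_sup.1 hmk
  · rw [Ideal.mem_comap, RingHom.mem_ker.1 (hI ha)]
    exact zero_mem _

lemma isSymmRankLEOne_of_minors {R : Type*} [CommRing R] {M : Matrix (Fin 3) (Fin 3) R}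
    (hM : M.IsSymm) (h₀₀ : M 1 1 * M 2 2 - M 1 2 * M 1 2 = 0)
    (h₀₁ : M 0 1 * M 2 2 - M 1 2 * M 0 2 = 0) (h₀₂ : M 0 1 * M 1 2 - M 0 2 * M 1 1 = 0)
    (h₁₁ : M 0 0 * M 2 2 - M 0 2 * M 0 2 = 0) (h₁₂ : M 0 0 * M 1 2 - M 0 2 * M 0 1 = 0)
    (h₂₂ : M 0 0 * M 1 1 - M 0 1 * M 0 1 = 0) : IsSymmRankLEOne M where
  isSymm := hM
  mul_swap := by
    have h₁₀ := hM.apply 0 1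
    have h₂₀ := hM.apply 0 2
    have h₂₁ := hM.apply 1 2
    have rows₀₁ : ∀ j k, M 0 j * M 1 k = M 0 k * M 1 j := by
      simp only [Fin.forall_fin_succ]
      grind
    have rows₀₂ : ∀ j k, M 0 j * M 2 k = M 0 k * M 2 j := by
      simp only [Fin.forall_fin_succ]
      grind
    have rows₁₂ : ∀ j k, M 1 j * M 2 k = M 1 k * M 2 j := by
      simp only [Fin.forall_fin_succ]
      grind
    have rows : ∀ i l j k, M i j * M l k = M i k * M l j := by
      intro i l j k
      fin_cases i <;> fin_cases l <;> grind
    intro i j k l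
    rw [hM.apply l k, hM.apply l j, rows]

section Theta

/-- The generic symmetric matrix `(x_{ij})`, with the coordinates of `ℙ⁵` numbered in the order
`x₀₀, x₀₁, x₀₂, x₁₁, x₁₂, x₂₂`. -/
noncomputable def genericSymm (k : Type*) [CommRing k] :
    Matrix (Fin 3) (Fin 3) (MvPolynomial (Fin 6) k) :=
  !![X 0, X 1, X 2; X 1, X 3, X 4; X 2, X 4, X 5]

variable (k : Type*) [CommRing k]

lemma genericSymm_isSymm : (genericSymm k).IsSymm := by
  refine Matrix.IsSymm.ext fun i j => ?_
  fin_cases i <;> fin_cases j <;> rfl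

lemma exists_genericSymm_eq_X (t : Fin 6) : ∃ i j, genericSymm k i j = X t := by
  fin_cases t
  exacts [⟨0, 0, rfl⟩, ⟨0, 1, rfl⟩, ⟨0, 2, rfl⟩, ⟨1, 1, rfl⟩, ⟨1, 2, rfl⟩, ⟨2, 2, rfl⟩]

lemma theta_genericSymm (i j : Fin 3) : theta k (genericSymm k i j) = X i * X j := by
  fin_cases i <;> fin_cases j <;> simp [theta, genericSymm] <;> ring

lemma theta_Delta (t : Fin 6) : theta k (Delta k t) = 0 := by
  fin_cases t <;> simp [theta, Delta, mul_assoc, mul_left_comm, mul_comm]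

lemma isHomogeneous_Delta (t : Fin 6) : (Delta k t).IsHomogeneous 2 := by
  fin_cases t <;> exact ((isHomogeneous_X k _).mul (isHomogeneous_X k _)).sub
    ((isHomogeneous_X k _).mul (isHomogeneous_X k _))

lemma isSymmRankLEOne_genericSymm_mod_Delta :
    IsSymmRankLEOne
      ((genericSymm k).map (Ideal.Quotient.mk (Ideal.span (Set.range (Delta k))))) := by
  have hΔ (t : Fin 6) : Ideal.Quotient.mk (Ideal.span (Set.range (Delta k))) (Delta k t) = 0 :=
    Ideal.Quotient.eq_zero_iff_mem.2 (Ideal.subset_span (Set.mem_range_self t))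
  exact isSymmRankLEOne_of_minors ((genericSymm_isSymm k).map _)
    (hΔ 0) (hΔ 1) (hΔ 2) (hΔ 3) (hΔ 4) (hΔ 5)

lemma comap_map_theta (J : Ideal (MvPolynomial (Fin 6) k)) :
    (J.map (theta k)).comap (theta k) = J ⊔ Ideal.span (Set.range (Delta k)) := by
  have hM := isSymmRankLEOne_genericSymm_mod_Delta k
  have hker : Ideal.span (Set.range (Delta k)) ≤ RingHom.ker (theta k).toRingHom :=
    Ideal.span_le.2 (Set.range_subset_iff.2 (theta_Delta k))
  refine comap_map_eq_sup_of_retraction hker (hM.pairingMap k).toAddMonoidHom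
    (hM.pairingMap_one k) (hM.pairingMap_algHom_mul (π := Ideal.Quotient.mkₐ k _) fun t => ?_) J
  obtain ⟨i, j, hij⟩ := exists_genericSymm_eq_X k t
  exact ⟨i, j, hij ▸ theta_genericSymm k i j, hij ▸ rfl⟩

end Theta

theorem ideal_of_even_degree_curve_general {k : Type*} [CommRing k] {f : MvPolynomial (Fin 3) k}
    {m : ℕ} {F : MvPolynomial (Fin 6) k} (hF : F.IsHomogeneous m) (hθF : theta k F = f) :
    Ideal.span {G : MvPolynomial (Fin 6) k |
        (∃ n, G.IsHomogeneous n) ∧ theta k G ∈ Ideal.span {f}} =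
      Ideal.span (insert F (Set.range (Delta k))) := by
  have hcomap : (Ideal.span {f}).comap (theta k) = Ideal.span (insert F (Set.range (Delta k))) := by
    rw [← hθF, ← Set.image_singleton, ← Ideal.map_span, comap_map_theta, ← Ideal.span_insert]
  apply le_antisymm
  · rw [← hcomap, Ideal.span_le]
    exact fun G hG => hG.2
  · refine Ideal.span_mono (Set.insert_subset ?_ (Set.range_subset_iff.2 fun t => ?_))
    · exact ⟨⟨m, hF⟩, hθF ▸ Ideal.mem_span_singleton_self _⟩
    · exact ⟨⟨2, isHomogeneous_Delta k t⟩, theta_Delta k t ▸ zero_mem _⟩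

/-- For an irreducible plane curve `C = Z(f)` of even degree `2m`, the homogeneous ideal of
its Veronese image (the ideal generated by the homogeneous `G` with `θ(G) ∈ (f)`) is generated
by the six minors `Δᵢⱼ` together with a single form `F` of degree `m` with `θ(F) = f`. -/
theorem ideal_of_even_degree_curve (k : Type*) [Field k] [IsAlgClosed k]
    (f : MvPolynomial (Fin 3) k) (m : ℕ) (hm : 1 ≤ m) (hfirr : Irreducible f)
    (hf : f.IsHomogeneous (2 * m))
    (F : MvPolynomial (Fin 6) k) (hF : F.IsHomogeneous m) (hθF : theta k F = f) :
    Ideal.span {G : MvPolynomial (Fin 6) k |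
        (∃ n, G.IsHomogeneous n) ∧ theta k G ∈ Ideal.span {f}} =
      Ideal.span (insert F (Set.range (Delta k))) :=
  ideal_of_even_degree_curve_general hF hθF
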